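/- arXiv:1604.07977 — 4 statements merged into one kernel-verified Lean document; each statement's English description precedes it below -/
import Mathlib

section
/- Let k and n be positive integers and let ζ ∈ ℂ be a primitive k-th root of unity. Then F_{kn}(ζ) · G_{kn}(ζ) = 0 if k ≡ 0 (mod 5), and F_{kn}(ζ) · G_{kn}(ζ) = F_n² if k ≢ 0 (mod 5), where F_n is the n-th ordinary Fibonacci number. -/
/-!
Write the recurrence for `F` as a product of transfer matrices `!![0, 1; ζ ^ i, 1]`; the entries of
the product of the first `m` of them are `G_{m-1}, F_m, G_m, F_{m+1}` (`transfer_eq_qFib`). At a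
primitive `k`-th root of unity the factors are `k`-periodic, so the product of `k * n` of them is
`M ^ n`, where `M` is the product over one period. Here `det M = -1` (`det_transfer_period`) and
`tr M = 1` (`trace_transfer`): marking each `ζ ^ i` by a variable `z` makes the trace a polynomial
in `z` of degree less than `k` which, by cyclicity of the trace, is invariant under `z ↦ ζ z`.
Hence `M ^ 2 = M + 1`, so the off-diagonal entries of `M ^ n` are `Nat.fib n` times those of `M`,
and with `a = F_{k+1}(ζ)` trace and determinant give `F_k(ζ) G_k(ζ) = 1 + a - a ^ 2`.

The value of `a` comes from Schur's identity (`aeval_qFibF_eq_finsum`)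
`F_{n+1}(q) = ∑ j, (-1) ^ j q ^ (j (5 j + 1) / 2) [n, ⌊(n - 5 j) / 2⌋]`,
whose right-hand side satisfies the recurrence of the left because the defect telescopes. For
`n = k` and `q = ζ` all Gaussian binomials other than `[k, 0]` and `[k, k]` vanish, so that at most
two terms remain: `a` is `0` or `1` if `5 ∤ k`, and `a ^ 2 = a + 1` if `5 ∣ k`.
-/

open Polynomial

/-- The Schur–Carlitz q-Fibonacci polynomials: F₀ = 0, F₁ = 1,
    Fₙ = Fₙ₋₁ + q^(n-2) Fₙ₋₂ for n ≥ 2. -/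
noncomputable def qFibF : ℕ → Polynomial ℤ
  | 0 => 0
  | 1 => 1
  | (n + 2) => qFibF (n + 1) + X ^ n * qFibF n

/-- The Schur–Carlitz q-Fibonacci polynomials G: G₀ = 0, G₁ = 1,
    Gₙ = Gₙ₋₁ + q^(n-1) Gₙ₋₂ for n ≥ 2. -/
noncomputable def qFibG : ℕ → Polynomial ℤ
  | 0 => 0
  | 1 => 1
  | (n + 2) => qFibG (n + 1) + X ^ (n + 1) * qFibG n

/-! ### Gaussian binomial coefficients -/

/-- The Gaussian binomial coefficient `[n, r]` at `q`, for every integer `r` (zero unless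
`0 ≤ r ≤ n`), defined through the Pascal rule `[n+1, r] = [n, r-1] + q ^ r [n, r]`. -/
noncomputable def gaussBinom (q : ℂ) : ℕ → ℤ → ℂ
  | 0, r => if r = 0 then 1 else 0
  | n + 1, r => gaussBinom q n (r - 1) + q ^ r * gaussBinom q n r

theorem gaussBinom_succ (q : ℂ) (n : ℕ) (r : ℤ) :
    gaussBinom q (n + 1) r = gaussBinom q n (r - 1) + q ^ r * gaussBinom q n r := rfl

/-- The second Pascal rule `[n+1, r] = [n, r] + q ^ (n+1-r) [n, r-1]`. -/
theorem gaussBinom_succ' {q : ℂ} (hq : q ≠ 0) (n : ℕ) (r : ℤ) :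
    gaussBinom q (n + 1) r = gaussBinom q n r + q ^ ((n : ℤ) + 1 - r) * gaussBinom q n (r - 1) := by
  induction n generalizing r with
  | zero =>
    rw [gaussBinom_succ]
    simp only [gaussBinom]
    rcases eq_or_ne r 0 with rfl | h0
    · simp
    · rcases eq_or_ne r 1 with rfl | h1
      · simp
      · simp [h0, sub_eq_zero, h1]
  | succ n ih =>
    have e1 := gaussBinom_succ q n r
    have e2 := gaussBinom_succ q n (r - 1)
    rw [gaussBinom_succ q (n + 1)]
    have h1 : q ^ r * q ^ ((n : ℤ) + 1 - r) = q ^ ((n : ℤ) + 1) := by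
      rw [← zpow_add₀ hq]; congr 1; ring
    have h2 : q ^ ((n : ℤ) + 1 + 1 - r) * q ^ (r - 1) = q ^ ((n : ℤ) + 1) := by
      rw [← zpow_add₀ hq]; congr 1; ring
    have h3 : (n : ℤ) + 1 - (r - 1) = (n : ℤ) + 1 + 1 - r := by ring
    have i1 := ih (r - 1)
    rw [h3] at i1
    push_cast
    linear_combination gaussBinom q n (r - 1) * (h1 - h2) + i1 + q ^ r * ih r - e1 -
      q ^ ((n : ℤ) + 1 + 1 - r) * e2

theorem gaussBinom_eq_zero (q : ℂ) (n : ℕ) (r : ℤ) (h : r < 0 ∨ (n : ℤ) < r) :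
    gaussBinom q n r = 0 := by
  induction n generalizing r with
  | zero =>
    have : r ≠ 0 := by rintro rfl; simp at h
    simp [gaussBinom, this]
  | succ n ih =>
    push_cast at h
    rw [gaussBinom_succ, ih _ (by omega), ih _ (by omega)]
    simp

theorem gaussBinom_zero_right (q : ℂ) (n : ℕ) : gaussBinom q n 0 = 1 := by
  induction n with
  | zero => simp [gaussBinom]
  | succ n ih => rw [gaussBinom_succ, ih, gaussBinom_eq_zero _ _ _ (by omega)]; simp

theorem gaussBinom_self (q : ℂ) (n : ℕ) : gaussBinom q n n = 1 := by
  induction n with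
  | zero => simp [gaussBinom]
  | succ n ih =>
    rw [gaussBinom_succ, gaussBinom_eq_zero _ _ ((n + 1 : ℕ) : ℤ) (by push_cast; omega)]
    push_cast
    simp [ih]

/-- At a primitive `k`-th root of unity all the inner coefficients `[k, r]` vanish: comparing the
two Pascal rules gives `[k-1, r-1] = -ζ ^ r [k-1, r]` as soon as `ζ ^ r ≠ 1`. -/
theorem gaussBinom_primitiveRoot {k : ℕ} (hk : 0 < k) {ζ : ℂ} (hζ : IsPrimitiveRoot ζ k)
    {r : ℤ} (h0 : r ≠ 0) (h1 : r ≠ k) : gaussBinom ζ k r = 0 := by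
  by_cases hr : r < 0 ∨ (k : ℤ) < r
  · exact gaussBinom_eq_zero _ _ _ hr
  have hq : ζ ≠ 0 := hζ.ne_zero hk.ne'
  obtain ⟨n, rfl⟩ : ∃ n, k = n + 1 := ⟨k - 1, by omega⟩
  have hne : ζ ^ r ≠ 1 := by
    intro h
    have hd := Int.le_of_dvd (by omega) ((hζ.zpow_eq_one_iff_dvd r).1 h)
    omega
  have e := gaussBinom_succ' hq n r
  have hz : ζ ^ ((n : ℤ) + 1 - r) * ζ ^ r = 1 := by
    rw [← zpow_add₀ hq]
    have h2 : (n : ℤ) + 1 - r + r = ((n + 1 : ℕ) : ℤ) := by push_cast; ring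
    rw [h2, zpow_natCast, hζ.pow_eq_one]
  rw [gaussBinom_succ] at e ⊢
  have : (ζ ^ r - 1) * (gaussBinom ζ n (r - 1) + ζ ^ r * gaussBinom ζ n r) = 0 := by
    linear_combination ζ ^ r * e + gaussBinom ζ n (r - 1) * hz
  exact (mul_eq_zero.1 this).resolve_left (sub_ne_zero.2 hne)

/-! ### Schur's identity -/

/-- The exponent of `q` in Schur's sum, `j (5 j + 1) / 2`, an exact division. -/
def schurExp (j : ℤ) : ℤ := j * (5 * j + 1) / 2

theorem two_mul_schurExp (j : ℤ) : 2 * schurExp j = j * (5 * j + 1) := by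
  unfold schurExp
  apply Int.mul_ediv_cancel'
  rcases Int.even_or_odd' j with ⟨c, rfl | rfl⟩
  · exact ⟨c * (5 * (2 * c) + 1), by ring⟩
  · exact ⟨(2 * c + 1) * (5 * c + 3), by ring⟩

/-- The `j`-th term of Schur's alternating sum for `F_{n+1}`; the division is a floor. -/
noncomputable def schurTerm (q : ℂ) (n : ℕ) (j : ℤ) : ℂ :=
  (-1) ^ j * q ^ schurExp j * gaussBinom q n (((n : ℤ) - 5 * j) / 2)

theorem finite_support_schurTerm (q : ℂ) (n : ℕ) :
    (Function.support (schurTerm q n)).Finite := by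
  apply (Set.finite_Icc (-(n : ℤ) - 1) (n + 1)).subset
  intro j hj
  by_contra hj'
  apply hj
  rw [Set.mem_Icc] at hj'
  rw [schurTerm, gaussBinom_eq_zero _ _ _ (by omega), mul_zero]

/-- The telescoping certificate for Schur's sum: half of the terms of the defect of the recurrence,
each of which cancels against the preceding one. -/
noncomputable def schurCert (q : ℂ) (n : ℕ) (j : ℤ) : ℂ :=
  if ((n : ℤ) - 5 * j) % 2 = 0 then
    (-1) ^ j * q ^ (schurExp j + ((n : ℤ) + 2 - 5 * j) / 2) *
      gaussBinom q n (((n : ℤ) + 2 - 5 * j) / 2)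
  else 0

theorem finite_support_schurCert (q : ℂ) (n : ℕ) :
    (Function.support (schurCert q n)).Finite := by
  apply (Set.finite_Icc (-(n : ℤ) - 1) (n + 1)).subset
  intro j hj
  by_contra hj'
  apply hj
  rw [Set.mem_Icc] at hj'
  rw [schurCert, gaussBinom_eq_zero _ _ _ (by omega), mul_zero, ite_self]

/-- The parity of `n - 5 j` decides which Pascal rule to apply and which of the two certificate
terms can be nonzero. -/
theorem schurTerm_recurrence {q : ℂ} (hq : q ≠ 0) (n : ℕ) (j : ℤ) :
    schurTerm q (n + 2) j + schurCert q n (j + 1) =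
      schurTerm q (n + 1) j + q ^ (n + 1) * schurTerm q n j + schurCert q n j := by
  rcases Int.even_or_odd' ((n : ℤ) - 5 * j) with ⟨r, hr | hr⟩
  · have c1 : schurCert q n (j + 1) = 0 := by rw [schurCert, if_neg (by omega)]
    rw [c1, schurCert, if_pos (by omega)]
    simp only [schurTerm]
    have d0 : ((n : ℤ) - 5 * j) / 2 = r := by omega
    have d1 : (((n + 1 : ℕ) : ℤ) - 5 * j) / 2 = r := by push_cast; omega
    have d2 : (((n + 2 : ℕ) : ℤ) - 5 * j) / 2 = r + 1 := by push_cast; omega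
    have d3 : ((n : ℤ) + 2 - 5 * j) / 2 = r + 1 := by omega
    rw [d0, d1, d2, d3, gaussBinom_succ q (n + 1) (r + 1), gaussBinom_succ' hq n (r + 1),
      zpow_add₀ hq (schurExp j)]
    have h : q ^ (r + 1) * q ^ ((n : ℤ) + 1 - (r + 1)) = q ^ (n + 1) := by
      rw [← zpow_add₀ hq, ← zpow_natCast]; congr 1; push_cast; ring
    simp only [add_sub_cancel_right]
    linear_combination (-1) ^ j * q ^ schurExp j * gaussBinom q n r * h
  · have c1 : schurCert q n j = 0 := by rw [schurCert, if_neg (by omega)]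
    rw [c1, schurCert, if_pos (by omega)]
    simp only [schurTerm]
    have d0 : ((n : ℤ) - 5 * j) / 2 = r := by omega
    have d1 : (((n + 1 : ℕ) : ℤ) - 5 * j) / 2 = r + 1 := by push_cast; omega
    have d2 : (((n + 2 : ℕ) : ℤ) - 5 * j) / 2 = r + 1 := by push_cast; omega
    have d3 : ((n : ℤ) + 2 - 5 * (j + 1)) / 2 = r - 1 := by omega
    have hs : schurExp (j + 1) + (r - 1) = schurExp j + ((n : ℤ) + 1 + 1 - (r + 1)) := by
      have h1 := two_mul_schurExp j
      have h2 := two_mul_schurExp (j + 1)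
      have : 2 * schurExp (j + 1) - 2 * schurExp j = 10 * j + 6 := by rw [h1, h2]; ring
      omega
    rw [d0, d1, d2, d3, hs, gaussBinom_succ' hq (n + 1) (r + 1), add_sub_cancel_right,
      gaussBinom_succ q n r, zpow_add₀ hq (schurExp j), zpow_add₀ (by norm_num : (-1 : ℂ) ≠ 0)]
    have h : q ^ ((n : ℤ) + 1 + 1 - (r + 1)) * q ^ r = q ^ (n + 1) := by
      rw [← zpow_add₀ hq, ← zpow_natCast]; congr 1; push_cast; ring
    push_cast
    linear_combination (-1) ^ j * q ^ schurExp j * gaussBinom q n r * h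

theorem finsum_schurTerm_succ_succ {q : ℂ} (hq : q ≠ 0) (n : ℕ) :
    ∑ᶠ j, schurTerm q (n + 2) j =
      ∑ᶠ j, schurTerm q (n + 1) j + q ^ (n + 1) * ∑ᶠ j, schurTerm q n j := by
  have hshift : ∑ᶠ j, schurCert q n (j + 1) = ∑ᶠ j, schurCert q n j :=
    finsum_comp_equiv (Equiv.addRight (1 : ℤ)) (f := schurCert q n)
  have hC := finite_support_schurCert q n
  have hC' : (Function.support fun j => schurCert q n (j + 1)).Finite :=
    hC.preimage (f := fun j : ℤ => j + 1) (fun a _ b _ h => by simpa using h)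
  have h0 := finite_support_schurTerm q n
  have h1 := finite_support_schurTerm q (n + 1)
  have h2 := finite_support_schurTerm q (n + 2)
  have h0' : (Function.support fun j => q ^ (n + 1) * schurTerm q n j).Finite :=
    h0.subset (Function.support_const_smul_subset (q ^ (n + 1)) (schurTerm q n))
  have h01 : (Function.support fun j =>
      schurTerm q (n + 1) j + q ^ (n + 1) * schurTerm q n j).Finite :=
    (h1.union h0').subset (Function.support_add _ _)
  have key := finsum_congr (schurTerm_recurrence hq n)
  rw [finsum_add_distrib h2 hC', finsum_add_distrib h01 hC, finsum_add_distrib h1 h0', hshift,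
    ← mul_finsum' _ _ h0] at key
  exact add_right_cancel key

/-- Schur's finite form of the first Rogers–Ramanujan identity. -/
theorem aeval_qFibF_eq_finsum {q : ℂ} (hq : q ≠ 0) (n : ℕ) :
    aeval q (qFibF (n + 1)) = ∑ᶠ j, schurTerm q n j := by
  induction n using Nat.twoStepInduction with
  | zero =>
    rw [finsum_eq_single _ 0]
    · simp [schurTerm, schurExp, gaussBinom, qFibF]
    · intro j hj
      rw [schurTerm, gaussBinom_eq_zero _ _ _ (by omega), mul_zero]
  | one =>
    rw [finsum_eq_single _ 0]
    · simp [schurTerm, schurExp, gaussBinom, qFibF]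
    · intro j hj
      rw [schurTerm, gaussBinom_eq_zero _ _ _ (by omega), mul_zero]
  | more n ih0 ih1 =>
    rw [finsum_schurTerm_succ_succ hq, ← ih0, ← ih1]
    simp [qFibF]

/-! ### Schur's identity at a root of unity -/

/-- For `m` odd the hypothesis forces `k` to be even, so `ζ ^ (k / 2) = -1`. -/
theorem zpow_of_two_mul_eq {k : ℕ} (hk : 0 < k) {ζ : ℂ} (hζ : IsPrimitiveRoot ζ k)
    {e m : ℤ} (h : 2 * e = m * k) : ζ ^ e = (-1) ^ m := by
  rcases Int.even_or_odd' m with ⟨l, rfl | rfl⟩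
  · have he : e = k * l := by linarith
    rw [he, zpow_mul, zpow_natCast, hζ.pow_eq_one, zpow_mul]
    norm_num
  · have hk2 : (k : ℤ) % 2 = 0 := by
      have : (k : ℤ) = 2 * (e - l * k) := by linarith
      omega
    obtain ⟨h', rfl⟩ : ∃ h', k = 2 * h' := ⟨k / 2, by omega⟩
    have he : e = h' * (2 * l + 1) := by push_cast at h; linarith
    have hh : ζ ^ h' = -1 := by
      have h1 : (ζ ^ h') ^ 2 = 1 := by rw [← pow_mul, mul_comm, hζ.pow_eq_one]
      exact (eq_or_eq_neg_of_sq_eq_sq _ 1 (by rw [h1, one_pow])).resolve_left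
        (hζ.pow_ne_one_of_pos_of_lt (by omega) (by omega))
    rw [he, zpow_mul, zpow_natCast, hh]

theorem schurTerm_eq_zero {k : ℕ} (hk : 0 < k) {ζ : ℂ} (hζ : IsPrimitiveRoot ζ k) {j : ℤ}
    (h0 : ((k : ℤ) - 5 * j) / 2 ≠ 0) (h1 : ((k : ℤ) - 5 * j) / 2 ≠ k) :
    schurTerm ζ k j = 0 := by
  rw [schurTerm, gaussBinom_primitiveRoot hk hζ h0 h1, mul_zero]

theorem neg_one_zpow_mul_self (m : ℤ) : (-1 : ℂ) ^ m * (-1) ^ m = 1 := by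
  rw [← mul_zpow]; norm_num

/-- Only `[k, 0]` and `[k, k]` survive in Schur's sum. If `5 ∤ k`, at most one index `j` reaches
them, and its term is `1`. -/
theorem aeval_qFibF_succ_of_not_dvd {k : ℕ} (hk : 0 < k) {ζ : ℂ} (hζ : IsPrimitiveRoot ζ k)
    (h5 : ¬ 5 ∣ k) : aeval ζ (qFibF (k + 1)) = 0 ∨ aeval ζ (qFibF (k + 1)) = 1 := by
  rw [aeval_qFibF_eq_finsum (hζ.ne_zero hk.ne')]
  have hcases : k % 5 = 1 ∨ k % 5 = 4 ∨ k % 5 = 2 ∨ k % 5 = 3 := by omega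
  rcases hcases with h | h | h
  · right
    obtain ⟨m, hm⟩ : ∃ m : ℤ, (k : ℤ) = 5 * m + 1 := ⟨(k / 5 : ℕ), by omega⟩
    rw [finsum_eq_single _ m (fun j hj => schurTerm_eq_zero hk hζ (by omega) (by omega))]
    have hd : ((k : ℤ) - 5 * m) / 2 = 0 := by omega
    rw [schurTerm, hd, gaussBinom_zero_right,
      zpow_of_two_mul_eq hk hζ (m := m) (by rw [two_mul_schurExp, hm]), neg_one_zpow_mul_self,
      mul_one]
  · right
    obtain ⟨m, hm⟩ : ∃ m : ℤ, (k : ℤ) = 5 * m + 4 := ⟨(k / 5 : ℕ), by omega⟩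
    rw [finsum_eq_single _ (-(m + 1))
      (fun j hj => schurTerm_eq_zero hk hζ (by omega) (by omega))]
    have hd : ((k : ℤ) - 5 * (-(m + 1))) / 2 = k := by omega
    rw [schurTerm, hd, gaussBinom_self,
      zpow_of_two_mul_eq hk hζ (m := m + 1) (by rw [two_mul_schurExp, hm]; ring), zpow_neg,
      inv_mul_cancel₀ (zpow_ne_zero _ (by norm_num)), mul_one]
  · left
    rw [finsum_congr (g := fun _ => 0)
      (fun j => schurTerm_eq_zero hk hζ (by omega) (by omega)), finsum_zero]

/-- If `5 ∣ k`, two terms of Schur's sum survive; they are `u` and `u⁻¹` for a primitive tenth root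
of unity `u`, so their sum is a root of `x ^ 2 - x - 1`. -/
theorem aeval_qFibF_succ_of_dvd {k : ℕ} (hk : 0 < k) {ζ : ℂ} (hζ : IsPrimitiveRoot ζ k)
    (h5 : 5 ∣ k) : aeval ζ (qFibF (k + 1)) ^ 2 = aeval ζ (qFibF (k + 1)) + 1 := by
  have hq : ζ ≠ 0 := hζ.ne_zero hk.ne'
  rw [aeval_qFibF_eq_finsum hq]
  obtain ⟨m, rfl⟩ := h5
  have hm0 : (m : ℤ) ≠ 0 := by omega
  have hs : ∑ᶠ j, schurTerm ζ (5 * m) j = schurTerm ζ (5 * m) m + schurTerm ζ (5 * m) (-m) := by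
    rw [finsum_eq_sum_of_support_subset (s := {(m : ℤ), -(m : ℤ)}), Finset.sum_pair (by omega)]
    intro j hj
    by_contra hj'
    simp only [Finset.coe_insert, Finset.coe_singleton, Set.mem_insert_iff,
      Set.mem_singleton_iff, not_or] at hj'
    exact hj (schurTerm_eq_zero hk hζ (by push_cast; omega) (by push_cast; omega))
  have hu : schurTerm ζ (5 * m) m = (-1) ^ (m : ℤ) * ζ ^ schurExp m := by
    have hd : (((5 * m : ℕ) : ℤ) - 5 * m) / 2 = 0 := by omega
    rw [schurTerm, hd, gaussBinom_zero_right, mul_one]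
  have hv : schurTerm ζ (5 * m) (-m) = (-1) ^ (m : ℤ) * ζ ^ schurExp (-m) := by
    have hd : (((5 * m : ℕ) : ℤ) - 5 * (-m)) / 2 = (5 * m : ℕ) := by omega
    rw [schurTerm, hd, gaussBinom_self, mul_one, zpow_neg, ← inv_zpow]
    norm_num
  rw [hs]
  have huv : schurTerm ζ (5 * m) m * schurTerm ζ (5 * m) (-m) = 1 := by
    rw [hu, hv, mul_mul_mul_comm, neg_one_zpow_mul_self, ← zpow_add₀ hq, one_mul,
      hζ.zpow_eq_one_iff_dvd]
    refine ⟨m, ?_⟩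
    have h1 := two_mul_schurExp m
    have h2 := two_mul_schurExp (-m)
    push_cast
    linarith
  have hu2 : schurTerm ζ (5 * m) m ^ 2 ≠ 1 := by
    rw [hu, mul_pow, pow_two, neg_one_zpow_mul_self, one_mul, ← zpow_natCast, ← zpow_mul, Ne,
      hζ.zpow_eq_one_iff_dvd, mul_comm (schurExp _)]
    push_cast
    rw [two_mul_schurExp]
    intro h
    have h' : (5 * m : ℤ) ∣ m := by
      have := dvd_sub h (Dvd.intro (m : ℤ) rfl : (5 * m : ℤ) ∣ 5 * m * m)
      ring_nf at this ⊢
      exact this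
    have := Int.le_of_dvd (by omega) h'
    omega
  have hu5 : schurTerm ζ (5 * m) m ^ 5 = -1 := by
    have h1 : ζ ^ (schurExp m * 5) = (-1) ^ (5 * (m : ℤ) + 1) :=
      zpow_of_two_mul_eq hk hζ (by have := two_mul_schurExp m; push_cast; linarith)
    have h2 : ((-1 : ℂ) ^ (m : ℤ)) ^ 5 = (-1) ^ (5 * (m : ℤ)) := by
      rw [← zpow_natCast, ← zpow_mul, mul_comm]; rfl
    have h3 : (ζ ^ schurExp m) ^ 5 = ζ ^ (schurExp m * 5) := by
      rw [← zpow_natCast, ← zpow_mul]; rfl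
    rw [hu, mul_pow, h2, h3, h1, zpow_add₀ (by norm_num), ← mul_assoc, neg_one_zpow_mul_self]
    norm_num
  generalize schurTerm ζ (5 * m) m = u at *
  generalize schurTerm ζ (5 * m) (-m) = v at *
  have hne : u + 1 ≠ 0 := by
    intro h
    apply hu2
    linear_combination (u - 1) * h
  have hcyc : u ^ 4 - u ^ 3 + u ^ 2 - u + 1 = 0 := by
    apply (mul_eq_zero.1 _).resolve_left hne
    linear_combination hu5
  -- Multiply the cyclotomic relation by `v ^ 2` and reduce with `u * v = 1`.
  linear_combination v ^ 2 * hcyc +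
    (-(u ^ 3 * v + u ^ 2) + (u ^ 2 * v + u) - (u * v + 1) + v + 2) * huv

/-! ### Transfer matrices -/

/-- The product `A (s+n-1) ⋯ A (s+1) A s` of the transfer matrices `A i = !![0, 1; q ^ i z, 1]` of
the recurrence `x (i+2) = x (i+1) + q ^ i z x i`. The extra variable `z` marks the number of
factors `q ^ i` in a monomial. -/
def transfer {R : Type*} [CommRing R] (q z : R) (s : ℕ) : ℕ → Matrix (Fin 2) (Fin 2) R
  | 0 => 1
  | n + 1 => !![0, 1; q ^ (s + n) * z, 1] * transfer q z s n

section transfer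

variable {R : Type*} [CommRing R] (q z : R)

theorem transfer_succ (s n : ℕ) :
    transfer q z s (n + 1) = !![0, 1; q ^ (s + n) * z, 1] * transfer q z s n := rfl

theorem transfer_add (s m n : ℕ) :
    transfer q z s (m + n) = transfer q z (s + m) n * transfer q z s m := by
  induction n with
  | zero => simp [transfer]
  | succ n ih => rw [← add_assoc, transfer_succ, ih, transfer_succ, mul_assoc, add_assoc]

/-- Replacing `z` by `q z` shifts the starting point. -/
theorem transfer_mul_right (s n : ℕ) : transfer q (q * z) s n = transfer q z (s + 1) n := by
  induction n with
  | zero => rfl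
  | succ n ih =>
    rw [transfer_succ, transfer_succ, ih]
    have e : q ^ (s + n) * (q * z) = q ^ (s + 1 + n) * z := by ring
    rw [e]

theorem transfer_map {S : Type*} [CommRing S] (f : R →+* S) (s n : ℕ) :
    f.mapMatrix (transfer q z s n) = transfer (f q) (f z) s n := by
  induction n with
  | zero => simp [transfer]
  | succ n ih =>
    rw [transfer_succ, transfer_succ, map_mul, ih]
    congr 1
    ext i j
    fin_cases i <;> fin_cases j <;> simp

theorem transfer_add_period {k : ℕ} (h : q ^ k = 1) (s n : ℕ) :
    transfer q z (s + k) n = transfer q z s n := by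
  induction n with
  | zero => rfl
  | succ n ih =>
    have : q ^ (s + k + n) = q ^ (s + n) := by rw [add_right_comm, pow_add _ _ k, h, mul_one]
    rw [transfer_succ, transfer_succ, ih, this]

theorem transfer_mul {k : ℕ} (h : q ^ k = 1) (n : ℕ) :
    transfer q z 0 (k * n) = transfer q z 0 k ^ n := by
  induction n with
  | zero => rfl
  | succ n ih =>
    have hp : transfer q z (0 + k * n) k = transfer q z 0 k :=
      transfer_add_period q z (k := k * n) (by rw [pow_mul, h, one_pow]) 0 k
    rw [mul_add, mul_one, transfer_add, hp, ih, ← pow_succ']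

/-- The trace over a full period does not depend on the starting point. -/
theorem trace_transfer_one {k : ℕ} (hk : 0 < k) (h : q ^ k = 1) :
    (transfer q z 1 k).trace = (transfer q z 0 k).trace := by
  obtain ⟨n, rfl⟩ : ∃ n, k = n + 1 := ⟨k - 1, by omega⟩
  have h0 : transfer q z 0 (n + 1) = transfer q z 1 n * !![0, 1; q ^ 0 * z, 1] := by
    rw [add_comm, transfer_add]
    simp [transfer]
  rw [transfer_succ, Matrix.trace_mul_comm, h0, add_comm 1 n, h, pow_zero]

theorem det_transfer (n : ℕ) :
    (transfer q z 0 n).det = ∏ i ∈ Finset.range n, (-(q ^ i * z)) := by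
  induction n with
  | zero => simp [transfer]
  | succ n ih =>
    rw [transfer_succ, Matrix.det_mul, ih, Finset.prod_range_succ, mul_comm]
    simp [Matrix.det_fin_two]

/-- For `z = 0` all factors equal the idempotent `!![0, 1; 0, 1]`. -/
theorem trace_transfer_zero {n : ℕ} (hn : 0 < n) : (transfer q 0 0 n).trace = 1 := by
  have : ∀ m, transfer q 0 0 (m + 1) = !![0, 1; 0, 1] := by
    intro m
    induction m with
    | zero => simp [transfer]
    | succ m ih => rw [transfer_succ, ih]; simp
  obtain ⟨m, rfl⟩ : ∃ m, n = m + 1 := ⟨n - 1, by omega⟩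
  simp [this, Matrix.trace_fin_two]

/-- The bounds on the diagonal are what the trace needs; those on the other entries make the
induction work. -/
theorem natDegree_transfer (a : R) (s n : ℕ) :
    (transfer (C a) X s (n + 1) 0 0).natDegree ≤ n ∧
    (transfer (C a) X s (n + 1) 1 0).natDegree ≤ n + 1 ∧
    (transfer (C a) X s (n + 1) 0 1).natDegree ≤ n ∧
    (transfer (C a) X s (n + 1) 1 1).natDegree ≤ n := by
  induction n with
  | zero =>
    refine ⟨?_, ?_, ?_, ?_⟩ <;> simp [transfer]
    rw [← C_pow]
    exact (natDegree_C_mul_le _ _).trans natDegree_X_le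
  | succ n ih =>
    obtain ⟨h00, h10, h01, h11⟩ := ih
    have hX : ∀ (p : R[X]) (i d : ℕ), p.natDegree ≤ d →
        (C a ^ i * X * p).natDegree ≤ d + 1 := by
      intro p i d hp
      rw [← C_pow, add_comm]
      exact natDegree_mul_le_of_le ((natDegree_C_mul_le _ _).trans natDegree_X_le) hp
    have e0 : ∀ j, transfer (C a) X s (n + 1 + 1) 0 j = transfer (C a) X s (n + 1) 1 j := by
      intro j
      rw [transfer_succ, Matrix.mul_apply]
      simp
    have e1 : ∀ j, transfer (C a) X s (n + 1 + 1) 1 j =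
        C a ^ (s + (n + 1)) * X * transfer (C a) X s (n + 1) 0 j +
          transfer (C a) X s (n + 1) 1 j := by
      intro j
      rw [transfer_succ, Matrix.mul_apply]
      simp
    rw [e0, e0, e1, e1]
    refine ⟨h10, ?_, by omega, ?_⟩
    · exact natDegree_add_le_of_degree_le ((hX _ _ _ h00).trans (by omega)) (by omega)
    · exact natDegree_add_le_of_degree_le (hX _ _ _ h01) (by omega)

end transfer

/-- The trace of the `z`-marked product over a period is a polynomial in `z` of degree less than
`k`, invariant under `z ↦ ζ z` by cyclicity of the trace; hence it is constant. -/
theorem trace_transfer {k : ℕ} (hk : 0 < k) {ζ : ℂ} (hζ : IsPrimitiveRoot ζ k) :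
    (transfer ζ 1 0 k).trace = 1 := by
  set T : ℂ[X] := (transfer (C ζ) X 0 k).trace with hT
  have hmap : ∀ {S : Type} [CommRing S] (f : ℂ[X] →+* S),
      f T = (transfer (f (C ζ)) (f X) 0 k).trace := by
    intro S _ f
    rw [← transfer_map, hT, Matrix.trace_fin_two, Matrix.trace_fin_two, map_add]
    rfl
  have hcomp : T.comp (C ζ * X) = T := by
    have h := hmap (compRingHom (C ζ * X))
    simp only [coe_compRingHom_apply, C_comp, X_comp] at h
    rw [h, transfer_mul_right, zero_add,
      trace_transfer_one _ _ hk (by rw [← C_pow, hζ.pow_eq_one, C_1])]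
  have hdeg : T.natDegree < k := by
    obtain ⟨n, rfl⟩ : ∃ n, k = n + 1 := ⟨k - 1, by omega⟩
    obtain ⟨h00, -, -, h11⟩ := natDegree_transfer ζ 0 n
    rw [hT, Matrix.trace_fin_two]
    exact Nat.lt_succ_of_le (natDegree_add_le_of_degree_le h00 h11)
  have hconst : T = C (T.coeff 0) := by
    ext i
    rcases Nat.eq_zero_or_pos i with rfl | hi
    · simp
    rw [coeff_C_of_ne_zero hi.ne']
    by_cases hik : k ≤ i
    · exact coeff_eq_zero_of_natDegree_lt (by omega)
    have h := congrArg (fun p => coeff p i) hcomp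
    simp only [comp_C_mul_X_coeff] at h
    have hne : ζ ^ i - 1 ≠ 0 := sub_ne_zero.2 (hζ.pow_ne_one_of_pos_of_lt hi.ne' (by omega))
    have : T.coeff i * (ζ ^ i - 1) = 0 := by linear_combination h
    exact (mul_eq_zero.1 this).resolve_right hne
  have h1 := hmap (evalRingHom (1 : ℂ))
  have h0 := hmap (evalRingHom (0 : ℂ))
  simp only [coe_evalRingHom, eval_C, eval_X] at h1 h0
  rw [trace_transfer_zero _ hk] at h0
  rw [← h1, ← h0, hconst]
  simp

theorem det_transfer_period {k : ℕ} (hk : 0 < k) {ζ : ℂ} (hζ : IsPrimitiveRoot ζ k) :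
    (transfer ζ 1 0 k).det = -1 := by
  have h : ∏ i ∈ Finset.range k, ζ ^ i = (-1) ^ ((k : ℤ) - 1) := by
    rw [Finset.prod_pow_eq_pow_sum, ← zpow_natCast]
    apply zpow_of_two_mul_eq hk hζ
    have := Finset.sum_range_id_mul_two k
    have h' : (((∑ i ∈ Finset.range k, i) * 2 : ℕ) : ℤ) = ((k * (k - 1) : ℕ) : ℤ) := by rw [this]
    push_cast [Nat.cast_sub hk] at h' ⊢
    linarith
  rw [det_transfer]
  simp only [mul_one]
  rw [Finset.prod_neg, h, Finset.card_range, zpow_sub₀ (by norm_num), zpow_natCast, zpow_one,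
    mul_div_assoc', ← mul_pow]
  norm_num

theorem transfer_eq_qFib (q : ℂ) (n : ℕ) :
    transfer q 1 0 (n + 1) = !![aeval q (qFibG n), aeval q (qFibF (n + 1));
      aeval q (qFibG (n + 1)), aeval q (qFibF (n + 2))] := by
  induction n with
  | zero => simp [transfer, qFibF, qFibG]
  | succ n ih =>
    rw [transfer_succ, ih]
    ext i j
    fin_cases i <;> fin_cases j <;> simp [qFibF, qFibG] <;> ring

/-! ### Powers of the period matrix -/

theorem sq_eq_of_trace_det {M : Matrix (Fin 2) (Fin 2) ℂ} (ht : M.trace = 1) (hd : M.det = -1) :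
    M * M = M + 1 := by
  rw [Matrix.trace_fin_two] at ht
  rw [Matrix.det_fin_two] at hd
  ext i j
  fin_cases i <;> fin_cases j <;> simp [Matrix.mul_apply]
  · linear_combination M 0 0 * ht - hd
  · linear_combination M 0 1 * ht
  · linear_combination M 1 0 * ht
  · linear_combination M 1 1 * ht - hd

theorem pow_succ_eq_fib {M : Matrix (Fin 2) (Fin 2) ℂ} (h : M * M = M + 1) (n : ℕ) :
    M ^ (n + 1) = (Nat.fib (n + 1) : ℂ) • M + (Nat.fib n : ℂ) • (1 : Matrix (Fin 2) (Fin 2) ℂ) := by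
  induction n with
  | zero => simp
  | succ n ih =>
    rw [pow_succ, ih, add_mul, smul_mul_assoc, smul_mul_assoc, h, one_mul, Nat.fib_add_two]
    push_cast
    module

theorem qFibF_mul_qFibG_eval_primitiveRoot (k n : ℕ) (hk : 0 < k) (hn : 0 < n) (ζ : ℂ)
    (hζ : IsPrimitiveRoot ζ k) :
    (5 ∣ k → Polynomial.aeval ζ (qFibF (k * n)) * Polynomial.aeval ζ (qFibG (k * n)) = 0) ∧
      (¬ 5 ∣ k → Polynomial.aeval ζ (qFibF (k * n)) * Polynomial.aeval ζ (qFibG (k * n)) =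
        (Nat.fib n : ℂ) ^ 2) := by
  have entries : ∀ m, 0 < m → transfer ζ 1 0 m 0 1 = aeval ζ (qFibF m) ∧
      transfer ζ 1 0 m 1 0 = aeval ζ (qFibG m) ∧
      transfer ζ 1 0 m 1 1 = aeval ζ (qFibF (m + 1)) := by
    intro m hm
    obtain ⟨m, rfl⟩ : ∃ l, m = l + 1 := ⟨m - 1, by omega⟩
    rw [transfer_eq_qFib]
    simp
  obtain ⟨hF, hG, -⟩ := entries (k * n) (Nat.mul_pos hk hn)
  obtain ⟨-, -, ha⟩ := entries k hk
  have ht := trace_transfer hk hζ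
  have hd := det_transfer_period hk hζ
  have hpow : transfer ζ 1 0 (k * n) = transfer ζ 1 0 k ^ n := transfer_mul _ _ hζ.pow_eq_one n
  obtain ⟨l, rfl⟩ : ∃ l, n = l + 1 := ⟨n - 1, by omega⟩
  rw [pow_succ_eq_fib (sq_eq_of_trace_det ht hd)] at hpow
  rw [← hF, ← hG, hpow]
  rw [Matrix.trace_fin_two, ha] at ht
  rw [Matrix.det_fin_two, ha] at hd
  have hprod : transfer ζ 1 0 k 0 1 * transfer ζ 1 0 k 1 0 =
      1 + aeval ζ (qFibF (k + 1)) - aeval ζ (qFibF (k + 1)) ^ 2 := by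
    linear_combination aeval ζ (qFibF (k + 1)) * ht - hd
  have hentry : ∀ (M : Matrix (Fin 2) (Fin 2) ℂ) (x y : ℂ),
      (x • M + y • (1 : Matrix (Fin 2) (Fin 2) ℂ)) 0 1 *
        (x • M + y • (1 : Matrix (Fin 2) (Fin 2) ℂ)) 1 0 = x ^ 2 * (M 0 1 * M 1 0) := by
    intro M x y
    simp
    ring
  rw [hentry, hprod]
  constructor
  · intro h5
    rw [aeval_qFibF_succ_of_dvd hk hζ h5]
    ring
  · intro h5
    rcases aeval_qFibF_succ_of_not_dvd hk hζ h5 with h | h <;> rw [h] <;> ring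
end

section
/- For every nonnegative integer n, the polynomial [5]_q = 1 + q + q² + q³ + q⁴ divides both F_{5n}(q) and G_{5n}(q) in ℤ[q]. -/
/-!
Modulo `P = 1 + X + X² + X³ + X⁴` one has `X ^ 5 = 1`, so both recurrences have coefficients of
period 5. Five steps from index `5n` therefore express the term at `5(n + 1)` as a fixed linear
combination of the terms at `5n` and `5n + 1`. In that combination the coefficient of the second
term is `P` for `F`, and `1 + X² + X³ + X⁴ + X⁶ = P + (X² - X) P` for `G`; both vanish modulo `P`,
so divisibility propagates by induction.
-/

open Polynomial

/-- `X ^ (5 * n)` is congruent to `1` modulo `[5]_q`, as `X ^ 5 - 1 = (X - 1) [5]_q`. -/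
lemma five_q_dvd_X_pow_sub_one (n : ℕ) :
    ((1 : Polynomial ℤ) + X + X ^ 2 + X ^ 3 + X ^ 4) ∣ X ^ (5 * n) - 1 := by
  have h : ((1 : Polynomial ℤ) + X + X ^ 2 + X ^ 3 + X ^ 4) ∣ X ^ 5 - 1 := ⟨X - 1, by ring⟩
  rw [pow_mul]
  exact h.trans (sub_one_dvd_pow_sub_one _ n)

/-- [5]_q = 1 + q + q² + q³ + q⁴ divides both F_{5n}(q) and G_{5n}(q). -/
theorem five_q_dvd_qFib (n : ℕ) :
    ((1 : Polynomial ℤ) + X + X ^ 2 + X ^ 3 + X ^ 4) ∣ qFibF (5 * n) ∧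
      ((1 : Polynomial ℤ) + X + X ^ 2 + X ^ 3 + X ^ 4) ∣ qFibG (5 * n) := by
  induction n with
  | zero => simp [qFibF, qFibG]
  | succ n ih =>
    obtain ⟨hF, hG⟩ := ih
    have hx := five_q_dvd_X_pow_sub_one n
    rw [show 5 * (n + 1) = 5 * n + 5 by ring]
    generalize 5 * n = m at *
    -- With `x = X ^ m`, split the coefficient of the term at `m + 1` into its value at `x = 1`,
    -- a multiple of `[5]_q`, and a multiple of `x - 1`.
    have eF : qFibF (m + 5) =
        qFibF m * (X ^ m * (1 + X ^ m * X ^ 2 + X ^ m * X ^ 3))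
        + (1 + X + X ^ 2 + X ^ 3 + X ^ 4) * qFibF (m + 1)
        + (X ^ m - 1) * ((X + X ^ 2 + X ^ 3 + X ^ 4 * (X ^ m + 1)) * qFibF (m + 1)) := by
      simp only [qFibF]
      ring
    have eG : qFibG (m + 5) =
        qFibG m * (X ^ m * X * (1 + X ^ m * X ^ 3 + X ^ m * X ^ 4))
        + (1 + X + X ^ 2 + X ^ 3 + X ^ 4) * ((1 + (X ^ 2 - X)) * qFibG (m + 1))
        + (X ^ m - 1) * ((X ^ 2 + X ^ 3 + X ^ 4 + X ^ 6 * (X ^ m + 1)) * qFibG (m + 1)) := by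
      simp only [qFibG]
      ring
    rw [eF, eG]
    exact ⟨dvd_add (dvd_add (hF.mul_right _) (dvd_mul_right _ _)) (hx.mul_right _),
      dvd_add (dvd_add (hG.mul_right _) (dvd_mul_right _ _)) (hx.mul_right _)⟩
end

section
/- For every nonnegative integer n, working in ℤ[q]: f(3n, q) ≡ 0 (mod 2) (i.e. every coefficient of f(3n, q) is even), f(3n+1, q) ≡ q^{n(3n−1)/2} (mod 2), and f(3n+2, q) ≡ q^{n(3n+1)/2} (mod 2), where a congruence of polynomials mod 2 means all coefficients of the difference are even. -/
/-!
The exponents are the generalized pentagonal numbers. With `e = n (3n - 1) / 2`, the congruences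
say that, modulo 2, `f(3n), f(3n+1), f(3n+2)` are `0, X^e, X^(e+n)`, and `e` grows by `3n + 1` when
`n` grows by one. In the recurrence for `f(3m+1)` two of the three terms vanish modulo 2 and one
survives. For `f(3m)` and `f(3m+2)` two of the terms are equal modulo 2 and cancel; the third is
zero for `f(3m)`. For `f(3m+1)` and `f(3m+2)` the exponent of the surviving term is the next
generalized pentagonal number. The induction is `qFibf_mod_two_aux`.
-/

open Polynomial

/-- The q-Fibonacci polynomials f(n, q): f(0) = 0, f(1) = 1, f(2) = 1, f(3) = 2,
    and f(n) = f(n−1) + q^(n−3) f(n−3) + q^(n−4) f(n−4) for n ≥ 4. -/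
noncomputable def qFibf : ℕ → Polynomial ℤ
  | 0 => 0
  | 1 => 1
  | 2 => 1
  | 3 => 2
  | (n + 4) => qFibf (n + 3) + X ^ (n + 1) * qFibf (n + 1) + X ^ n * qFibf n

/-- For the pentagonal exponent `e = n (3n - 1) / 2`, doubling clears both the truncated
subtraction (at `n = 0` the factor `n` vanishes) and the division. -/
lemma two_mul_pentagonal (n : ℕ) : 2 * (n * (3 * n - 1) / 2) + n = 3 * n ^ 2 := by
  have h : Even (n * (3 * n - 1)) := by
    rcases Nat.even_or_odd n with hn | hn
    · exact hn.mul_right _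
    · exact Even.mul_left (by obtain ⟨k, rfl⟩ := hn; exact ⟨3 * k + 1, by omega⟩) _
  rw [Nat.two_mul_div_two_of_even h]
  rcases n with _ | k
  · rfl
  · rw [show 3 * (k + 1) - 1 = 3 * k + 2 by omega]
    ring

lemma pentagonal_succ (n : ℕ) :
    (n + 1) * (3 * (n + 1) - 1) / 2 = n * (3 * n - 1) / 2 + (3 * n + 1) := by
  have h1 := two_mul_pentagonal n
  have h2 := two_mul_pentagonal (n + 1)
  have h3 : 3 * (n + 1) ^ 2 = 3 * n ^ 2 + 6 * n + 3 := by ring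
  omega

lemma half_mul_three_mul_add_one (n : ℕ) : n * (3 * n + 1) / 2 = n * (3 * n - 1) / 2 + n := by
  have h1 := two_mul_pentagonal n
  have h2 : n * (3 * n + 1) = 3 * n ^ 2 + n := by ring
  omega

/-- The three congruences together with the next one, `f(3n+3) ≡ 0`. The fourth conjunct is what
makes a one-step induction work, since the recurrence looks back four terms. -/
lemma qFibf_mod_two_aux (n : ℕ) :
    (2 : Polynomial ℤ) ∣ qFibf (3 * n) ∧
      (2 : Polynomial ℤ) ∣ (qFibf (3 * n + 1) - X ^ (n * (3 * n - 1) / 2)) ∧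
      (2 : Polynomial ℤ) ∣ (qFibf (3 * n + 2) - X ^ (n * (3 * n - 1) / 2 + n)) ∧
      (2 : Polynomial ℤ) ∣ qFibf (3 * n + 3) := by
  induction n with
  | zero => simp [qFibf]
  | succ n ih =>
    rw [pentagonal_succ, show 3 * (n + 1) = 3 * n + 3 by ring]
    generalize n * (3 * n - 1) / 2 = e at ih ⊢
    obtain ⟨⟨a, ha⟩, ⟨b, hb⟩, ⟨c, hc⟩, ⟨d, hd⟩⟩ := ih
    have r4 : qFibf (3 * n + 4) = qFibf (3 * n + 3) + X ^ (3 * n + 1) * qFibf (3 * n + 1)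
        + X ^ (3 * n) * qFibf (3 * n) := by rw [qFibf]
    have r5 : qFibf (3 * n + 5) = qFibf (3 * n + 4) + X ^ (3 * n + 2) * qFibf (3 * n + 2)
        + X ^ (3 * n + 1) * qFibf (3 * n + 1) := by rw [qFibf]
    have r6 : qFibf (3 * n + 6) = qFibf (3 * n + 5) + X ^ (3 * n + 3) * qFibf (3 * n + 3)
        + X ^ (3 * n + 2) * qFibf (3 * n + 2) := by rw [qFibf]
    have h4 : qFibf (3 * n + 4) - X ^ (e + (3 * n + 1))
        = 2 * (d + X ^ (3 * n + 1) * b + X ^ (3 * n) * a) := by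
      linear_combination r4 + hd + X ^ (3 * n + 1) * hb + X ^ (3 * n) * ha
    -- `f(3n+4)` and `X^(3n+1) f(3n+1)` are both `X^(e+3n+1)` modulo 2, so they cancel;
    -- the leftover `2 X^(e+3n+1)` accounts for the extra summand on the right.
    have h5 : qFibf (3 * n + 5) - X ^ (e + (3 * n + 1) + (n + 1))
        = 2 * ((d + X ^ (3 * n + 1) * b + X ^ (3 * n) * a) + X ^ (3 * n + 2) * c
          + X ^ (3 * n + 1) * b + X ^ (e + (3 * n + 1))) := by
      linear_combination r5 + h4 + X ^ (3 * n + 2) * hc + X ^ (3 * n + 1) * hb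
    refine ⟨⟨d, hd⟩, ⟨_, h4⟩, ⟨_, h5⟩, ?_⟩
    -- Likewise `f(3n+5)` cancels against `X^(3n+2) f(3n+2)`.
    refine ⟨((d + X ^ (3 * n + 1) * b + X ^ (3 * n) * a) + X ^ (3 * n + 2) * c
          + X ^ (3 * n + 1) * b + X ^ (e + (3 * n + 1))) + X ^ (3 * n + 3) * d
          + X ^ (3 * n + 2) * c + X ^ (e + (3 * n + 1) + (n + 1)), ?_⟩
    linear_combination r6 + h5 + X ^ (3 * n + 3) * hd + X ^ (3 * n + 2) * hc

/-- Modulo 2: f(3n) ≡ 0, f(3n+1) ≡ q^{n(3n−1)/2}, f(3n+2) ≡ q^{n(3n+1)/2}. -/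
theorem qFibf_mod_two (n : ℕ) :
    (2 : Polynomial ℤ) ∣ qFibf (3 * n) ∧
      (2 : Polynomial ℤ) ∣ (qFibf (3 * n + 1) - X ^ (n * (3 * n - 1) / 2)) ∧
      (2 : Polynomial ℤ) ∣ (qFibf (3 * n + 2) - X ^ (n * (3 * n + 1) / 2)) := by
  obtain ⟨h0, h1, h2, -⟩ := qFibf_mod_two_aux n
  exact ⟨h0, h1, by rwa [half_mul_three_mul_add_one]⟩
end

section
/- For every positive integer n, the polynomial f(6n, q) is divisible by 2(1 + q)(1 + q²) = 2·[4]_q in ℤ[q], where [4]_q = 1 + q + q² + q³. -/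
/-!
The number `2` is prime in `ℤ[X]` and does not divide the monic polynomial
`[4]_q = (1 + X)(1 + X²)`, so divisibility by `2` and by `[4]_q` can be shown separately.

* Modulo `2` (`two_dvd_qFibf`): unfolding the recurrence once for each of three consecutive indices
  writes `f(3k+6)` as a combination of `f(3k)` and `f(3k+3)` plus twice a polynomial, so `f(3k)` is
  even for every `k`.
* Modulo `[4]_q` (`four_q_dvd_qFibf`): there `q⁴ = 1`, so the coefficients of the recurrence have
  period `4`, and the initial values `f(12), …, f(15)` are `q²` times `f(0), …, f(3)`. Hence
  `f(n+12) = q² f(n)` for all `n`, and it remains to note `f(0) = f(6) = 0`.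
-/

open Polynomial

lemma qFibf_add_four (n : ℕ) :
    qFibf (n + 4) = qFibf (n + 3) + X ^ (n + 1) * qFibf (n + 1) + X ^ n * qFibf n := by
  rw [qFibf]

lemma two_dvd_qFibf (k : ℕ) : (2 : ℤ[X]) ∣ qFibf (3 * k) := by
  induction k using Nat.twoStepInduction with
  | zero => simp [qFibf]
  | one => simp [qFibf]
  | more k h0 h1 =>
    obtain ⟨a, ha⟩ := h0
    obtain ⟨b, hb⟩ := h1
    have e4 := qFibf_add_four (3 * k)
    have e5 := qFibf_add_four (3 * k + 1)
    have e6 := qFibf_add_four (3 * k + 2)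
    simp only [mul_add, add_assoc, Nat.reduceAdd, Nat.reduceMul] at hb e4 e5 e6 ⊢
    refine ⟨X ^ (3 * k) * a + (1 + X ^ (3 * k + 3)) * b + X ^ (3 * k + 1) * qFibf (3 * k + 1)
      + X ^ (3 * k + 2) * qFibf (3 * k + 2), ?_⟩
    linear_combination e6 + e5 + e4 + X ^ (3 * k) * ha + (1 + X ^ (3 * k + 3)) * hb

section ModFourQ

variable {R : Type*} [CommRing R] {q : R} {F : ℕ → R}

/-- The values at `6` and at `12, …, 15` of the `q`-Fibonacci sequence specialized to an element `q`
of a commutative ring with `[4]_q = 0`. -/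
lemma initial_values (hq : (1 + q) * (1 + q ^ 2) = 0)
    (h0 : F 0 = 0) (h1 : F 1 = 1) (h2 : F 2 = 1) (h3 : F 3 = 2)
    (h : ∀ n, F (n + 4) = F (n + 3) + q ^ (n + 1) * F (n + 1) + q ^ n * F n) :
    F 6 = 0 ∧ F 12 = 0 ∧ F 13 = q ^ 2 ∧ F 14 = q ^ 2 ∧ F 15 = 2 * q ^ 2 := by
  -- Each coefficient of `hq` is the quotient by `[4]_q` of the difference of the two sides.
  have h4 : F 4 = q + 2 := by
    rw [h 0, h3, h1, h0]
    ring
  have h5 : F 5 = q ^ 2 + 2 * q + 2 := by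
    rw [h 1, h4, h2, h1]
    ring
  have h6 : F 6 = 0 := by
    rw [h 2, h5, h3, h2]
    linear_combination 2 * hq
  have h7 : F 7 = -2 * q ^ 2 - q := by
    rw [h 3, h6, h4, h3]
    linear_combination (q ^ 2 + q) * hq
  have h8 : F 8 = -q ^ 2 + q + 1 := by
    rw [h 4, h7, h5, h4]
    linear_combination (q ^ 4 + q ^ 3 + q ^ 2 - q - 1) * hq
  have h9 : F 9 = 2 * q := by
    rw [h 5, h8, h6, h5]
    linear_combination (q ^ 4 + q ^ 3 - 2 * q + 1) * hq
  have h10 : F 10 = -1 := by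
    rw [h 6, h9, h7, h6]
    linear_combination (-2 * q ^ 6 + q ^ 5 + q ^ 4 - 2 * q ^ 2 + q + 1) * hq
  have h11 : F 11 = q ^ 3 := by
    rw [h 7, h10, h8, h7]
    linear_combination (-q ^ 7 + q ^ 5 - q ^ 3 + q - 1) * hq
  have h12 : F 12 = 0 := by
    rw [h 8, h11, h9, h8]
    linear_combination (q ^ 7 - q ^ 4 + q ^ 3) * hq
  have h13 : F 13 = q ^ 2 := by
    rw [h 9, h12, h10, h9]
    linear_combination (q ^ 7 - q ^ 6 + q ^ 3 - q ^ 2) * hq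
  have h14 : F 14 = q ^ 2 := by
    rw [h 10, h13, h11, h10]
    linear_combination (q ^ 11 - q ^ 10) * hq
  have h15 : F 15 = 2 * q ^ 2 := by
    rw [h 11, h14, h12, h11]
    linear_combination (q ^ 11 - q ^ 10 + q ^ 7 - q ^ 6 + q ^ 3 - q ^ 2) * hq
  exact ⟨h6, h12, h13, h14, h15⟩

/-- The factor `q²` is `1` at the root `-1` of `[4]_q` and `-1` at the roots `±i`; `q⁴ = 1` makes the
recurrence invariant under the shift by `12`, so the four initial values suffice. -/
lemma periodicity (hq : (1 + q) * (1 + q ^ 2) = 0)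
    (h0 : F 0 = 0) (h1 : F 1 = 1) (h2 : F 2 = 1) (h3 : F 3 = 2)
    (h : ∀ n, F (n + 4) = F (n + 3) + q ^ (n + 1) * F (n + 1) + q ^ n * F n) (n : ℕ) :
    F (n + 12) = q ^ 2 * F n := by
  obtain ⟨-, v0, v1, v2, v3⟩ := initial_values hq h0 h1 h2 h3 h
  have c12 : q ^ 12 = 1 := by
    have c4 : q ^ 4 = 1 := by linear_combination (q - 1) * hq
    rw [show 12 = 4 * 3 from rfl, pow_mul, c4, one_pow]
  induction n using Nat.strong_induction_on with
  | _ n ih =>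
    match n with
    | 0 => simp [v0, h0]
    | 1 => simp [v1, h1]
    | 2 => simp [v2, h2]
    | 3 => rw [v3, h3, mul_comm]
    | m + 4 =>
      have e := h (m + 12)
      have i0 := ih m (by omega)
      have i1 := ih (m + 1) (by omega)
      have i3 := ih (m + 3) (by omega)
      rw [show m + 12 + 4 = m + 4 + 12 by ring, show m + 12 + 3 = m + 3 + 12 by ring,
        show m + 12 + 1 = m + 1 + 12 by ring, i0, i1, i3, pow_add q (m + 1), pow_add q m 12,
        c12] at e
      rw [e, h m]
      ring

lemma eq_zero_of_six_mul (hq : (1 + q) * (1 + q ^ 2) = 0)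
    (h0 : F 0 = 0) (h1 : F 1 = 1) (h2 : F 2 = 1) (h3 : F 3 = 2)
    (h : ∀ n, F (n + 4) = F (n + 3) + q ^ (n + 1) * F (n + 1) + q ^ n * F n) (n : ℕ) :
    F (6 * n) = 0 := by
  induction n using Nat.twoStepInduction with
  | zero => simpa using h0
  | one => simpa using (initial_values hq h0 h1 h2 h3 h).1
  | more n ih _ =>
    rw [show 6 * (n + 2) = 6 * n + 12 by ring, periodicity hq h0 h1 h2 h3 h, ih, mul_zero]

end ModFourQ

lemma four_q_dvd_qFibf (n : ℕ) : ((1 : ℤ[X]) + X) * (1 + X ^ 2) ∣ qFibf (6 * n) := by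
  rw [← Ideal.mem_span_singleton, ← Ideal.Quotient.eq_zero_iff_mem]
  set π := Ideal.Quotient.mk (Ideal.span {((1 : ℤ[X]) + X) * (1 + X ^ 2)})
  refine eq_zero_of_six_mul (q := π X) (F := fun m => π (qFibf m)) ?_ ?_ ?_ ?_ ?_ ?_ n
  · have : π ((1 + X) * (1 + X ^ 2)) = 0 :=
      Ideal.Quotient.eq_zero_iff_mem.2 (Ideal.mem_span_singleton_self _)
    simpa using this
  · simp [qFibf]
  · simp [qFibf]
  · simp [qFibf]
  · simpa [qFibf] using map_ofNat π 2
  · intro m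
    simp [qFibf_add_four]

/-- f(6n, q) is divisible by 2(1 + q)(1 + q²) = 2·[4]_q. -/
theorem two_mul_four_q_dvd_qFibf (n : ℕ) (hn : 0 < n) :
    (2 * ((1 : Polynomial ℤ) + X) * (1 + X ^ 2)) ∣ qFibf (6 * n) := by
  obtain ⟨g, hg⟩ := four_q_dvd_qFibf n
  have h2 : (2 : ℤ[X]) ∣ qFibf (6 * n) := by
    simpa only [← mul_assoc, Nat.reduceMul] using two_dvd_qFibf (2 * n)
  have hp : Prime (2 : ℤ[X]) := by
    simpa using (Polynomial.prime_C_iff (R := ℤ) (r := 2)).2 Int.prime_two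
  -- `[4]_q` has constant coefficient `1`, hence is not divisible by `2`.
  have hn2 : ¬ (2 : ℤ[X]) ∣ (1 + X) * (1 + X ^ 2) := by
    rintro ⟨c, hc⟩
    have := congrArg (Polynomial.eval 0) hc
    simp at this
    omega
  rw [hg] at h2 ⊢
  obtain ⟨k, rfl⟩ := (hp.dvd_or_dvd h2).resolve_left hn2
  exact ⟨k, by ring⟩
end
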